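/- Let N be a positive integer and let g : ℤ_N × ℤ_N → ℂ satisfy the equations: g(x,y) = Σ_{y₁+y₂=y} g(x,y₁)g(x,y₂) and g(x,y) = Σ_{x₁+x₂=x} g(x₁,y)g(x₂,y) for all x,y ∈ ℤ_N, together with Σ_{y∈ℤ_N} g(0,y) = 1 and Σ_{x∈ℤ_N} g(x,0) = 1. Then there exist a divisor d of N and a complex number ξ with ξ^d = 1 such that, writing each element of ℤ_N by its representative in {0,...,N−1}, g(x,y) = (1/d)·ξ^{(x/(N/d))·(y/(N/d))} if (N/d) | x and (N/d) | y, and g(x,y) = 0 otherwise. -/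

import Mathlib

open Finset

/-!
Put `ψ = ZMod.stdAddChar`, `E x k = ∑ y, g x y ψ(k y)` and `D k y = ∑ x, g x y ψ(k x)`. The two
convolution equations say that `E` and `D` take values in `{0, 1}`; Fourier inversion turns them
into a two-dimensional Fourier pair,
`N D k' y = ∑ E x k ψ(k' x - k y)` and `N E x k = ∑ D k' y ψ(-(k' x - k y))`,
and the normalisations say that `E` and `D` each have exactly `N` entries equal to `1`.
Hence `D k' y = 1` forces `ψ(k' x - k y) = 1` for all `(x, k)` in the support `S` of `E`
(`N` unit complex numbers summing to `N`), and inverting once more, `S` is precisely the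
annihilator of the support of `D`. In particular `S` is a subgroup of `ℤ_N × ℤ_N`
(`support_iff`).

If `(x, κ) ∈ S`, translating by it gives `g x y = ψ(-κ y) g 0 y`; if no such `κ` exists then
`g x y = 0`. So `x ↦ g x 0` is constant on the subgroup `P` (the projection of `S`) and zero
elsewhere, and `y ↦ g 0 y` is constant on the subgroup `Q` (the annihilator of the fibre of `S`
over `0`) and zero elsewhere. Both constants equal `g 0 0`, so by the normalisations
`|P| = |Q| = d` with `g 0 0 = 1 / d`, and a subgroup of order `d` of `ℤ_N` consists of the
multiples of `N / d`. Finally `ξ = ψ(-κ · N / d)` where `(N / d, κ) ∈ S`.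
-/

namespace GroupEquations

variable {N : ℕ} [NeZero N]

local notation "ψ" => (ZMod.stdAddChar (N := N))

/-- The Fourier transform on `ℤ_N`, with kernel `ψ (k * y)`. -/
noncomputable def hat (f : ZMod N → ℂ) (k : ZMod N) : ℂ := ∑ y, f y * ψ (k * y)

/-- A convolution idempotent has a Fourier transform with values `0` and `1`. -/
lemma hat_zero_or_one (f : ZMod N → ℂ)
    (h : ∀ y, f y = ∑ p ∈ univ.filter (fun p : ZMod N × ZMod N => p.1 + p.2 = y), f p.1 * f p.2)
    (k : ZMod N) : hat f k = 0 ∨ hat f k = 1 := by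
  have key : hat f k = hat f k * hat f k := by
    conv_rhs => rw [hat, Finset.sum_mul_sum, ← Finset.sum_product', Finset.univ_product_univ,
      ← Finset.sum_fiberwise (s := univ) (g := fun p : ZMod N × ZMod N => p.1 + p.2)]
    rw [hat]
    refine Finset.sum_congr rfl fun y _ => ?_
    rw [h y, Finset.sum_mul]
    refine Finset.sum_congr rfl fun p hp => ?_
    rw [← (Finset.mem_filter.1 hp).2, mul_add, AddChar.map_add_eq_mul]
    ring
  have h0 : hat f k * (hat f k - 1) = 0 := by linear_combination -key
  rcases mul_eq_zero.1 h0 with h' | h'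
  · exact Or.inl h'
  · exact Or.inr (sub_eq_zero.1 h')

lemma hat_inversion (f : ZMod N → ℂ) (y : ZMod N) :
    (N : ℂ) * f y = ∑ k, hat f k * ψ (-(k * y)) := by
  simp only [hat, Finset.sum_mul]
  rw [Finset.sum_comm]
  have h : ∀ z : ZMod N, ∑ k, f z * ψ (k * z) * ψ (-(k * y))
      = if z = y then (N : ℂ) * f y else 0 := by
    intro z
    have := AddChar.sum_mulShift (R := ZMod N) (R' := ℂ) (z - y)
      (ZMod.isPrimitive_stdAddChar N)
    simp only [mul_assoc, ← AddChar.map_add_eq_mul, ← Finset.mul_sum]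
    simp only [← sub_eq_add_neg, ← mul_sub, this, sub_eq_zero, ZMod.card]
    split_ifs with hz
    · rw [hz, mul_comm]
    · simp
  simp [h]

lemma eq_one_of_norm_of_re {z : ℂ} (hz : ‖z‖ = 1) (h : z.re = 1) : z = 1 := by
  have h2 : Complex.normSq z = 1 := by rw [Complex.normSq_eq_norm_sq, hz]; norm_num
  rw [Complex.normSq_apply, h] at h2
  have h3 : z.im = 0 := by nlinarith
  exact Complex.ext h h3

/-- If a `{0, 1}`-weighted sum of unit complex numbers equals the total weight, then every number
carrying weight `1` is equal to `1`. -/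
lemma eq_one_of_sum_eq {ι : Type*} [Fintype ι] (e u : ι → ℂ) (he : ∀ i, e i = 0 ∨ e i = 1)
    (hu : ∀ i, ‖u i‖ = 1) (h : ∑ i, e i * u i = ∑ i, e i) (i : ι) (hi : e i = 1) : u i = 1 := by
  have hle : ∀ j ∈ univ, (e j * u j).re ≤ (e j).re := by
    intro j _
    rcases he j with h0 | h0
    · simp [h0]
    · simpa [h0, hu j] using Complex.re_le_norm (u j)
  have hs : ∑ j, (e j * u j).re = ∑ j, (e j).re := by
    rw [← Complex.re_sum, ← Complex.re_sum, h]
  have := (Finset.sum_eq_sum_iff_of_le hle).1 hs i (Finset.mem_univ i)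
  exact eq_one_of_norm_of_re (hu i) (by simpa [hi] using this)

/-- Two-dimensional Fourier inversion relating the two partial transforms of `g`. -/
lemma double_hat (g : ZMod N → ZMod N → ℂ) (k' y : ZMod N) :
    (N : ℂ) * hat (fun x => g x y) k'
      = ∑ p : ZMod N × ZMod N, hat (g p.1) p.2 * ψ (k' * p.1 - p.2 * y) := by
  rw [← Finset.univ_product_univ, Finset.sum_product, hat, Finset.mul_sum]
  refine Finset.sum_congr rfl fun x _ => ?_
  rw [← mul_assoc, hat_inversion, Finset.sum_mul]
  refine Finset.sum_congr rfl fun k _ => ?_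
  rw [mul_assoc, ← AddChar.map_add_eq_mul]
  congr 2
  ring

/-- The support of the partial transform in the second variable is the annihilator of the support
of the partial transform in the first variable. -/
lemma support_iff (g : ZMod N → ZMod N → ℂ)
    (hE : ∀ x k, hat (g x) k = 0 ∨ hat (g x) k = 1)
    (hD : ∀ k y, hat (fun x => g x y) k = 0 ∨ hat (fun x => g x y) k = 1)
    (h3 : ∑ y : ZMod N, g 0 y = 1) (h4 : ∑ x : ZMod N, g x 0 = 1) (x k : ZMod N) :
    hat (g x) k = 1 ↔ ∀ k' y, hat (fun x => g x y) k' = 1 → ψ (k' * x - k * y) = 1 := by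
  have hN : (N : ℂ) ≠ 0 := Nat.cast_ne_zero.2 (NeZero.ne N)
  have totE : ∑ p : ZMod N × ZMod N, hat (g p.1) p.2 = N := by
    have := double_hat g 0 0
    simpa [hat, h4] using this.symm
  have totD : ∑ p : ZMod N × ZMod N, hat (fun x => g x p.1) p.2 = N := by
    have := double_hat (fun y x => g x y) 0 0
    simpa [hat, h3] using this.symm
  constructor
  · intro hx k' y hd
    have := double_hat g k' y
    rw [hd, mul_one, ← totE] at this
    exact eq_one_of_sum_eq (fun p : ZMod N × ZMod N => hat (g p.1) p.2)
      (fun p => ψ (k' * p.1 - p.2 * y)) (fun p => hE _ _) (fun p => AddChar.norm_apply _ _)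
      this.symm (x, k) hx
  · intro H
    have h5 := double_hat (fun y x => g x y) k x
    have h6 : ∑ p : ZMod N × ZMod N, hat (fun x => g x p.1) p.2 * ψ (k * p.1 - p.2 * x) = N := by
      rw [← totD]
      refine Finset.sum_congr rfl fun p _ => ?_
      rcases hD p.2 p.1 with h | h
      · rw [h, zero_mul]
      · have h7 := H _ _ h
        rw [← neg_sub, AddChar.map_neg_eq_inv, h7, inv_one, mul_one]
    rw [h6] at h5
    exact mul_left_cancel₀ hN (h5.trans (mul_one _).symm)

/-- A subgroup of order `d` of `ℤ_N` consists of the multiples of `N / d`. -/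
lemma mem_iff_dvd_val (H : AddSubgroup (ZMod N)) (x : ZMod N) :
    x ∈ H ↔ N / Nat.card H ∣ x.val := by
  have hd : Nat.card H ∣ N := by
    simpa using AddSubgroup.card_addSubgroup_dvd_card H
  have hpos : 0 < Nat.card H := Nat.card_pos
  have hmem : x ∈ H ↔ Nat.card H • x = 0 := by
    classical
    -- `H` lies in the `d`-torsion, which has at most `d` elements.
    have hsub : univ.filter (· ∈ H) ⊆ univ.filter (fun a : ZMod N => Nat.card H • a = 0) := by
      intro a ha
      simp only [Finset.mem_filter, Finset.mem_univ, true_and] at ha ⊢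
      exact congrArg Subtype.val (card_nsmul_eq_zero' (x := (⟨a, ha⟩ : H)))
    have hcard : (univ.filter (· ∈ H)).card = Nat.card H := by
      rw [Nat.card_eq_fintype_card, Fintype.card_subtype]
    have heq := Finset.eq_of_subset_of_card_le hsub
      (by rw [hcard]; exact IsAddCyclic.card_nsmul_eq_zero_le hpos)
    simpa using Finset.ext_iff.1 heq x
  rw [hmem]
  obtain ⟨m, hm⟩ := hd
  have hz : Nat.card H • x = ((Nat.card H * x.val : ℕ) : ZMod N) := by
    simp
  rw [hz, ZMod.natCast_eq_zero_iff]
  generalize Nat.card H = d at *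
  subst hm
  rw [Nat.mul_div_cancel_left _ hpos, Nat.mul_dvd_mul_iff_left hpos]

end GroupEquations

open GroupEquations in
/-- Every solution `g : ℤ_N × ℤ_N → ℂ` of the group equations
`g(x,y) = ∑_{y₁+y₂=y} g(x,y₁)g(x,y₂)`, `g(x,y) = ∑_{x₁+x₂=x} g(x₁,y)g(x₂,y)`,
`∑_y g(0,y) = 1`, `∑_x g(x,0) = 1` is of the form
`g(x,y) = (1/d)·ξ^{(x/(N/d))·(y/(N/d))}` if `(N/d) ∣ x` and `(N/d) ∣ y` (representatives in
`{0,…,N−1}`), and `0` otherwise, for some divisor `d ∣ N` and some `ξ ∈ ℂ` with `ξ^d = 1`. -/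
theorem cyclic_solutions_of_group_equations
    (N : ℕ) [NeZero N] (g : ZMod N → ZMod N → ℂ)
    (h1 : ∀ x y : ZMod N,
      g x y = ∑ p ∈ univ.filter (fun p : ZMod N × ZMod N => p.1 + p.2 = y),
        g x p.1 * g x p.2)
    (h2 : ∀ x y : ZMod N,
      g x y = ∑ p ∈ univ.filter (fun p : ZMod N × ZMod N => p.1 + p.2 = x),
        g p.1 y * g p.2 y)
    (h3 : ∑ y : ZMod N, g 0 y = 1)
    (h4 : ∑ x : ZMod N, g x 0 = 1) :
    ∃ d : ℕ, d ∣ N ∧ ∃ ξ : ℂ, ξ ^ d = 1 ∧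
      ∀ x y : ZMod N,
        g x y = if (N / d) ∣ x.val ∧ (N / d) ∣ y.val
          then (1 / (d : ℂ)) * ξ ^ ((x.val / (N / d)) * (y.val / (N / d)))
          else 0 := by
  classical
  let ψ := ZMod.stdAddChar (N := N)
  have hN : (N : ℂ) ≠ 0 := Nat.cast_ne_zero.2 (NeZero.ne N)
  have hE : ∀ x k, hat (g x) k = 0 ∨ hat (g x) k = 1 := fun x => hat_zero_or_one _ (h1 x)
  have hD : ∀ k y, hat (fun x => g x y) k = 0 ∨ hat (fun x => g x y) k = 1 :=
    fun k y => hat_zero_or_one _ (fun x => h2 x y) k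
  have hS := support_iff g hE hD h3 h4
  have S0 : hat (g 0) 0 = 1 := by simp [hat, h3]
  have Sadd : ∀ x k x' k', hat (g x) k = 1 → hat (g x') k' = 1 → hat (g (x + x')) (k + k') = 1 := by
    intro x k x' k' h h'
    rw [hS] at h h' ⊢
    intro l y hl
    rw [show l * (x + x') - (k + k') * y = (l * x - k * y) + (l * x' - k' * y) by ring,
      AddChar.map_add_eq_mul, h l y hl, h' l y hl, one_mul]
  have Sneg : ∀ x k, hat (g x) k = 1 → hat (g (-x)) (-k) = 1 := by
    intro x k h
    rw [hS] at h ⊢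
    intro l y hl
    rw [show l * (-x) - (-k) * y = -(l * x - k * y) by ring,
      AddChar.map_neg_eq_inv, h l y hl, inv_one]
  have shift : ∀ x κ, hat (g x) κ = 1 → ∀ y, g x y = ψ (-(κ * y)) * g 0 y := by
    intro x κ h y
    have hk : ∀ k, hat (g x) (k + κ) = hat (g 0) k := by
      intro k
      have hiff : hat (g x) (k + κ) = 1 ↔ hat (g 0) k = 1 := by
        constructor
        · intro h'
          simpa using Sadd _ _ _ _ h' (Sneg _ _ h)
        · intro h'
          simpa using Sadd _ _ _ _ h' h
      rcases hE x (k + κ) with a | a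
      · rcases hE 0 k with b | b
        · rw [a, b]
        · exact (hiff.2 b).trans b.symm
      · exact a.trans (hiff.1 a).symm
    apply mul_left_cancel₀ hN
    rw [hat_inversion, mul_left_comm, hat_inversion, Finset.mul_sum,
      ← Equiv.sum_comp (Equiv.addRight κ)]
    refine Finset.sum_congr rfl fun k _ => ?_
    rw [Equiv.coe_addRight, hk, add_mul, neg_add, AddChar.map_add_eq_mul]
    ring
  -- The projection of the support to the first coordinate.
  let P : AddSubgroup (ZMod N) :=
    { carrier := {x | ∃ k, hat (g x) k = 1}
      add_mem' := fun ⟨k, hk⟩ ⟨k', hk'⟩ => ⟨_, Sadd _ _ _ _ hk hk'⟩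
      zero_mem' := ⟨0, S0⟩
      neg_mem' := fun ⟨k, hk⟩ => ⟨_, Sneg _ _ hk⟩ }
  -- The annihilator of the fibre of the support over `0`.
  let Q : AddSubgroup (ZMod N) :=
    { carrier := {y | ∀ k, hat (g 0) k = 1 → ψ (k * y) = 1}
      add_mem' := fun {a b} ha hb k hk => by
        rw [mul_add, AddChar.map_add_eq_mul, ha k hk, hb k hk, one_mul]
      zero_mem' := fun k _ => by rw [mul_zero, AddChar.map_zero_eq_one]
      neg_mem' := fun {a} ha k hk => by
        rw [mul_neg, AddChar.map_neg_eq_inv, ha k hk, inv_one] }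
  have memP : ∀ x, x ∈ P ↔ ∃ k, hat (g x) k = 1 := fun x => Iff.rfl
  have memQ : ∀ y, y ∈ Q ↔ ∀ k, hat (g 0) k = 1 → ψ (k * y) = 1 := fun y => Iff.rfl
  have offP : ∀ x, x ∉ P → ∀ y, g x y = 0 := by
    intro x hx y
    apply mul_left_cancel₀ hN
    rw [hat_inversion, mul_zero]
    refine Finset.sum_eq_zero fun k _ => ?_
    rcases hE x k with h | h
    · rw [h, zero_mul]
    · exact absurd ⟨k, h⟩ hx
  have g0 : ∀ y, g 0 y = if y ∈ Q then g 0 0 else 0 := by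
    intro y
    split_ifs with hy
    · apply mul_left_cancel₀ hN
      rw [hat_inversion, hat_inversion]
      refine Finset.sum_congr rfl fun k _ => ?_
      rcases hE 0 k with h | h
      · rw [h, zero_mul, zero_mul]
      · rw [AddChar.map_neg_eq_inv, (memQ y).1 hy k h]
        simp
    · rw [memQ] at hy
      push Not at hy
      obtain ⟨κ, hκ, hne⟩ := hy
      -- Translating by `(0, κ)` multiplies `g 0 y` by a number different from `1`.
      have h := shift 0 κ hκ y
      by_contra h0
      apply hne
      have h' : ψ (-(κ * y)) = 1 := mul_right_cancel₀ h0 (by rw [one_mul]; exact h.symm)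
      rw [AddChar.map_neg_eq_inv] at h'
      exact inv_eq_one.1 h'
  have gx0 : ∀ x, g x 0 = if x ∈ P then g 0 0 else 0 := by
    intro x
    split_ifs with hx
    · obtain ⟨κ, hκ⟩ := hx
      rw [shift x κ hκ 0]
      simp
    · exact offP x hx 0
  have cardQ : (Nat.card Q : ℂ) * g 0 0 = 1 := by
    rw [← h3, Finset.sum_congr rfl fun y _ => g0 y, ← Finset.sum_filter, Finset.sum_const,
      nsmul_eq_mul, Nat.card_eq_fintype_card, Fintype.card_subtype]
  have cardP : (Nat.card P : ℂ) * g 0 0 = 1 := by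
    rw [← h4, Finset.sum_congr rfl fun y _ => gx0 y, ← Finset.sum_filter, Finset.sum_const,
      nsmul_eq_mul, Nat.card_eq_fintype_card, Fintype.card_subtype]
  have hPQ : Nat.card P = Nat.card Q := by
    have hne : g 0 0 ≠ 0 := right_ne_zero_of_mul (cardP.trans_ne one_ne_zero)
    exact_mod_cast mul_right_cancel₀ hne (cardP.trans cardQ.symm)
  have hdvd : Nat.card P ∣ N := by
    simpa using AddSubgroup.card_addSubgroup_dvd_card P
  have mP := mem_iff_dvd_val P
  have mQ := mem_iff_dvd_val Q
  rw [← hPQ] at mQ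
  have hc : g 0 0 = 1 / (Nat.card P : ℂ) := eq_one_div_of_mul_eq_one_right cardP
  generalize Nat.card P = d at *
  have hx0 : ((N / d : ℕ) : ZMod N) ∈ P := by
    rw [mP, ZMod.val_natCast]
    exact (Nat.dvd_mod_iff (Nat.div_dvd_of_dvd hdvd)).2 dvd_rfl
  obtain ⟨κ, hκ⟩ := hx0
  refine ⟨d, hdvd, ψ (-(κ * ((N / d : ℕ) : ZMod N))), ?_, ?_⟩
  · rw [← AddChar.map_nsmul_eq_pow, nsmul_eq_mul, mul_neg, mul_left_comm, ← Nat.cast_mul,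
      Nat.mul_div_cancel' hdvd]
    simp
  · intro x y
    simp only [← mP x, ← mQ y]
    by_cases hx : x ∈ P
    swap
    · rw [if_neg (fun h => hx h.1), offP x hx]
    have hxv : x = (x.val / (N / d)) • ((N / d : ℕ) : ZMod N) := by
      rw [nsmul_eq_mul, ← Nat.cast_mul, Nat.div_mul_cancel ((mP x).1 hx), ZMod.natCast_zmod_val]
    have Snsmul : ∀ a : ℕ, hat (g (a • ((N / d : ℕ) : ZMod N))) (a • κ) = 1 := by
      intro a
      induction a with
      | zero => simpa using S0
      | succ a ih => rw [succ_nsmul, succ_nsmul]; exact Sadd _ _ _ _ ih hκ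
    have hxk := Snsmul (x.val / (N / d))
    rw [← hxv] at hxk
    rw [shift x _ hxk y, g0 y]
    by_cases hy : y ∈ Q
    swap
    · rw [if_neg hy, if_neg (fun h => hy h.2), mul_zero]
    have hyv : y = (y.val / (N / d)) • ((N / d : ℕ) : ZMod N) := by
      rw [nsmul_eq_mul, ← Nat.cast_mul, Nat.div_mul_cancel ((mQ y).1 hy), ZMod.natCast_zmod_val]
    rw [if_pos hy, if_pos ⟨hx, hy⟩, hc, mul_comm, ← AddChar.map_nsmul_eq_pow]
    congr 2
    conv_lhs => rw [hyv]
    simp only [nsmul_eq_mul]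
    push_cast
    ring
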